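/- Closure of word languages under grounded hypotheses: let H be a grounded set of hypotheses. Then (i) for every L ⊆ Σ*, cl_H(L) = cl_H^seq(L); and (ii) for all L, L' ⊆ SP, cl_H(L ∥ L') = cl_H(L) ∥ cl_H(L'). -/

import Mathlib

namespace CKAH

open Classical

/-! ### Labelled posets and pomsets -/

/-- A labelled poset over alphabet `A`: a finite carrier with a partial order and labelling. -/
structure LPoset (A : Type) : Type 1 where
  carrier : Type
  [fin : Fintype carrier]
  [ord : PartialOrder carrier]
  lab : carrier → A

attribute [instance] LPoset.fin LPoset.ord

/-- Isomorphism of labelled posets: an order isomorphism preserving labels. -/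
def LPoset.Iso {A : Type} (u v : LPoset A) : Prop :=
  ∃ e : u.carrier ≃o v.carrier, ∀ x, v.lab (e x) = u.lab x

theorem LPoset.iso_equivalence (A : Type) : Equivalence (LPoset.Iso (A := A)) where
  refl u := ⟨OrderIso.refl _, fun _ => rfl⟩
  symm := by
    rintro u v ⟨e, he⟩
    exact ⟨e.symm, fun x => by rw [← he (e.symm x), OrderIso.apply_symm_apply]⟩
  trans := by
    rintro u v w ⟨e, he⟩ ⟨f, hf⟩
    exact ⟨e.trans f, fun x => by rw [OrderIso.trans_apply, hf, he]⟩

instance pomSetoid (A : Type) : Setoid (LPoset A) := ⟨LPoset.Iso, LPoset.iso_equivalence A⟩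

/-- A pomset is an isomorphism class of labelled posets. -/
def Pomset (A : Type) : Type 1 := Quotient (pomSetoid A)

/-- Sequential composition of labelled posets: disjoint union, everything on the left
below everything on the right (lexicographic sum order). -/
def LPoset.seqL {A : Type} (u v : LPoset A) : LPoset A where
  carrier := u.carrier ⊕ₗ v.carrier
  fin := inferInstanceAs (Fintype (u.carrier ⊕ v.carrier))
  lab := fun x => Sum.elim u.lab v.lab (ofLex x)

/-- Parallel composition of labelled posets: disjoint union with no cross ordering. -/
def LPoset.parL {A : Type} (u v : LPoset A) : LPoset A where
  carrier := u.carrier ⊕ v.carrier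
  lab := Sum.elim u.lab v.lab

def Pomset.seq {A : Type} : Pomset A → Pomset A → Pomset A :=
  Quotient.map₂ LPoset.seqL (by
    rintro u₁ u₂ ⟨e, he⟩ v₁ v₂ ⟨f, hf⟩
    refine ⟨(RelIso.sumLexCongr e f :
      (u₁.carrier ⊕ₗ v₁.carrier) ≃o (u₂.carrier ⊕ₗ v₂.carrier)), ?_⟩
    rintro (x | x)
    · exact he x
    · exact hf x)

/-- Order isomorphism between disjoint-union orders, from component isomorphisms. -/
def sumOrderIso {α β γ δ : Type} [PartialOrder α] [PartialOrder β] [PartialOrder γ]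
    [PartialOrder δ] (e : α ≃o γ) (f : β ≃o δ) : (α ⊕ β) ≃o (γ ⊕ δ) where
  toEquiv := Equiv.sumCongr e.toEquiv f.toEquiv
  map_rel_iff' := by
    rintro (x | x) (y | y) <;> simp [Sum.le_def, e.le_iff_le, f.le_iff_le]

def Pomset.par {A : Type} : Pomset A → Pomset A → Pomset A :=
  Quotient.map₂ LPoset.parL (by
    rintro u₁ u₂ ⟨e, he⟩ v₁ v₂ ⟨f, hf⟩
    refine ⟨sumOrderIso e f, ?_⟩
    rintro (x | x)
    · exact he x
    · exact hf x)

def LPoset.emptyL (A : Type) : LPoset A := { carrier := Fin 0, lab := fun x => x.elim0 }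

def LPoset.singleL {A : Type} (a : A) : LPoset A := { carrier := PUnit, lab := fun _ => a }

/-- The empty pomset `1`. -/
def Pomset.empty (A : Type) : Pomset A := ⟦LPoset.emptyL A⟧

/-- The single-letter pomset. -/
def Pomset.single {A : Type} (a : A) : Pomset A := ⟦LPoset.singleL a⟧

/-- Subsumption on labelled posets: `u ⊑ v` iff there is a label-preserving
order-preserving bijection from the carrier of `v` to that of `u`. -/
def LPoset.subL {A : Type} (u v : LPoset A) : Prop :=
  ∃ h : v.carrier ≃ u.carrier,
    (∀ x, u.lab (h x) = v.lab x) ∧ ∀ x y : v.carrier, x ≤ y → h x ≤ h y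

/-- Subsumption of pomsets: `Pomset.sub U V` means `U ⊑ V`. -/
def Pomset.sub {A : Type} : Pomset A → Pomset A → Prop :=
  Quotient.lift₂ LPoset.subL (by
    rintro u₁ v₁ u₂ v₂ ⟨e, he⟩ ⟨f, hf⟩
    refine propext ⟨?_, ?_⟩
    · rintro ⟨h, hl, hm⟩
      refine ⟨(f.toEquiv.symm.trans h).trans e.toEquiv, fun x => ?_, fun x y hxy => ?_⟩
      · show u₂.lab (e (h (f.symm x))) = v₂.lab x
        rw [he, hl, ← hf (f.symm x), OrderIso.apply_symm_apply]
      · simp only [Equiv.trans_apply]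
        exact e.le_iff_le.mpr (hm _ _ (f.symm.le_iff_le.mpr hxy))
    · rintro ⟨h, hl, hm⟩
      refine ⟨(f.toEquiv.trans h).trans e.toEquiv.symm, fun x => ?_, fun x y hxy => ?_⟩
      · show u₁.lab (e.symm (h (f x))) = v₁.lab x
        rw [← he (e.symm (h (f x))), OrderIso.apply_symm_apply, hl, hf]
      · simp only [Equiv.trans_apply]
        exact e.symm.le_iff_le.mpr (hm _ _ (f.le_iff_le.mpr hxy)))

def LPoset.isWordL {A : Type} (u : LPoset A) : Prop := ∀ x y : u.carrier, x ≤ y ∨ y ≤ x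

/-- A pomset is a word when it is totally ordered. -/
def Pomset.IsWord {A : Type} : Pomset A → Prop :=
  Quotient.lift LPoset.isWordL (by
    rintro u v ⟨e, -⟩
    refine propext ⟨fun h x y => ?_, fun h x y => ?_⟩
    · rcases h (e.symm x) (e.symm y) with h' | h'
      · exact Or.inl (e.symm.le_iff_le.mp h')
      · exact Or.inr (e.symm.le_iff_le.mp h')
    · rcases h (e x) (e y) with h' | h'
      · exact Or.inl (e.le_iff_le.mp h')
      · exact Or.inr (e.le_iff_le.mp h'))

def LPoset.mapL {A B : Type} (f : A → B) (u : LPoset A) : LPoset B :=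
  { carrier := u.carrier, lab := f ∘ u.lab }

/-- Relabelling of pomsets along a function on letters. -/
def Pomset.map {A B : Type} (f : A → B) : Pomset A → Pomset B :=
  Quotient.map (LPoset.mapL f)
    (by rintro u v ⟨e, he⟩; exact ⟨e, fun x => congrArg f (he x)⟩)

def LPoset.overL {A : Type} (Γ : Set A) (u : LPoset A) : Prop := ∀ x, u.lab x ∈ Γ

/-- All labels of the pomset belong to `Γ`. -/
def Pomset.Over {A : Type} (Γ : Set A) : Pomset A → Prop :=
  Quotient.lift (LPoset.overL Γ) (by
    rintro u v ⟨e, he⟩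
    refine propext ⟨fun h x => ?_, fun h x => ?_⟩
    · have h2 := he (e.symm x)
      rw [OrderIso.apply_symm_apply] at h2
      rw [h2]; exact h _
    · rw [← he x]; exact h _)

/-- Series-parallel pomsets. -/
inductive Pomset.IsSP {A : Type} : Pomset A → Prop
  | empty : Pomset.IsSP (Pomset.empty A)
  | single (a : A) : Pomset.IsSP (Pomset.single a)
  | seq {U V : Pomset A} : Pomset.IsSP U → Pomset.IsSP V → Pomset.IsSP (Pomset.seq U V)
  | par {U V : Pomset A} : Pomset.IsSP U → Pomset.IsSP V → Pomset.IsSP (Pomset.par U V)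

def SPset (A : Type) : Set (Pomset A) := {U | U.IsSP}

/-! ### Pomset contexts -/

/-- Contexts are pomsets over `Option A`, where `none` plays the role of `*`.
`uniqueStarL` says there is exactly one `*`-labelled node. -/
def LPoset.uniqueStarL {A : Type} (c : LPoset (Option A)) : Prop := ∃! x, c.lab x = none

theorem LPoset.uniqueStarL_congr {A : Type} {u v : LPoset (Option A)}
    (e : u.carrier ≃o v.carrier) (he : ∀ x, v.lab (e x) = u.lab x) :
    u.uniqueStarL ↔ v.uniqueStarL := by
  constructor
  · rintro ⟨x, hx, hux⟩
    refine ⟨e x, show v.lab (e x) = none by rw [he]; exact hx, fun y hy => ?_⟩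
    have h2 := he (e.symm y)
    rw [OrderIso.apply_symm_apply] at h2
    have h3 : e.symm y = x := hux _ (h2.symm.trans hy)
    rw [← h3, OrderIso.apply_symm_apply]
  · rintro ⟨x, hx, hvx⟩
    refine ⟨e.symm x, ?_, fun y hy => ?_⟩
    · show u.lab (e.symm x) = none
      have h2 := he (e.symm x)
      rw [OrderIso.apply_symm_apply] at h2
      rw [← h2]; exact hx
    · have h3 : e y = x := hvx _ (show v.lab (e y) = none by rw [he]; exact hy)
      rw [← h3, OrderIso.symm_apply_apply]

/-- A pomset context: exactly one node labelled `*`. -/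
def Pomset.IsCtx {A : Type} : Pomset (Option A) → Prop :=
  Quotient.lift LPoset.uniqueStarL
    (fun _ _ h => propext (LPoset.uniqueStarL_congr h.choose h.choose_spec))

/-- Series-parallel pomset contexts. -/
def Pomset.IsSPCtx {A : Type} (C : Pomset (Option A)) : Prop := C.IsCtx ∧ C.IsSP

/-- Sequential (totally ordered) pomset contexts. -/
def Pomset.IsSeqCtx {A : Type} (C : Pomset (Option A)) : Prop := C.IsCtx ∧ C.IsWord

/-- The trivial context `*`. -/
def starCtx (A : Type) : Pomset (Option A) := Pomset.single (none : Option A)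

theorem option_get_eq_get {α : Type} {o₁ o₂ : Option α} (h : o₁ = o₂) (h₁ : o₁.isSome)
    (h₂ : o₂.isSome) : o₁.get h₁ = o₂.get h₂ := by subst h; rfl

/-- The order of `C[U]`: the orders of `C` (restricted away from `*`) and of `U`, with a
point of `C` below (resp. above) all of `U` when it is below (resp. above) the unique
`*`-node of `C`.  (For well-definedness of the order, the cross-relations are guarded by
the requirement that the star node is unique, which holds for every genuine context.) -/
def LPoset.insLe {A : Type} (c : LPoset (Option A)) (u : LPoset A) :
    ({x : c.carrier // c.lab x ≠ none} ⊕ u.carrier) →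
    ({x : c.carrier // c.lab x ≠ none} ⊕ u.carrier) → Prop
  | Sum.inl x, Sum.inl y => x.val ≤ y.val
  | Sum.inr x, Sum.inr y => x ≤ y
  | Sum.inl x, Sum.inr _ => c.uniqueStarL ∧ ∃ s, c.lab s = none ∧ x.val ≤ s
  | Sum.inr _, Sum.inl y => c.uniqueStarL ∧ ∃ s, c.lab s = none ∧ s ≤ y.val

/-- Insertion of a labelled poset `u` into the gap of a context `c`: the `*`-labelled
node is removed and `u` is put in its place, inheriting the order relations of `*`. -/
noncomputable def LPoset.insL {A : Type} (c : LPoset (Option A)) (u : LPoset A) :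
    LPoset A where
  carrier := {x : c.carrier // c.lab x ≠ none} ⊕ u.carrier
  fin := by classical exact inferInstance
  ord :=
    { le := LPoset.insLe c u
      lt := fun p q => LPoset.insLe c u p q ∧ ¬ LPoset.insLe c u q p
      lt_iff_le_not_ge := fun _ _ => Iff.rfl
      le_refl := by rintro (x | x) <;> exact le_refl _
      le_trans := by
        rintro (x | x) (y | y) (z | z) h1 h2
        · exact le_trans h1 h2
        · obtain ⟨hu, s, hs, hys⟩ := h2
          exact ⟨hu, s, hs, le_trans h1 hys⟩
        · obtain ⟨hu, s, hs, hxs⟩ := h1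
          obtain ⟨-, t, ht, htz⟩ := h2
          obtain ⟨w, hw, huniq⟩ := hu
          have hst : s = t := (huniq s hs).trans (huniq t ht).symm
          exact le_trans (hst ▸ hxs) htz
        · exact h1
        · obtain ⟨hu, s, hs, hsy⟩ := h1
          exact ⟨hu, s, hs, le_trans hsy h2⟩
        · obtain ⟨hu, s, hs, hsy⟩ := h1
          obtain ⟨-, t, ht, hyt⟩ := h2
          obtain ⟨w, hw, huniq⟩ := hu
          have hst : s = t := (huniq s hs).trans (huniq t ht).symm
          have hy : y.val = s := le_antisymm (hst.symm ▸ hyt) hsy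
          exact absurd (hy.symm ▸ hs) y.prop
        · exact h2
        · exact le_trans h1 h2
      le_antisymm := by
        rintro (x | x) (y | y) h1 h2
        · exact congrArg Sum.inl (Subtype.ext (le_antisymm h1 h2))
        · obtain ⟨hu, s, hs, hxs⟩ := h1
          obtain ⟨-, t, ht, htx⟩ := h2
          obtain ⟨w, hw, huniq⟩ := hu
          have hst : s = t := (huniq s hs).trans (huniq t ht).symm
          have hx : x.val = s := le_antisymm hxs (hst.symm ▸ htx)
          exact absurd (hx.symm ▸ hs) x.prop
        · obtain ⟨hu, s, hs, hsy⟩ := h1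
          obtain ⟨-, t, ht, hyt⟩ := h2
          obtain ⟨w, hw, huniq⟩ := hu
          have hst : s = t := (huniq s hs).trans (huniq t ht).symm
          have hy : y.val = s := le_antisymm (hst.symm ▸ hyt) hsy
          exact absurd (hy.symm ▸ hs) y.prop
        · exact congrArg Sum.inr (le_antisymm h1 h2) }
  lab := Sum.elim (fun x => (c.lab x.val).get (Option.isSome_iff_ne_none.mpr x.prop)) u.lab

/-- `Pomset.ins C U` is `C[U]`: plugging the pomset `U` into the gap of the context `C`. -/
noncomputable def Pomset.ins {A : Type} : Pomset (Option A) → Pomset A → Pomset A :=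
  Quotient.map₂ LPoset.insL (by
    rintro c₁ c₂ ⟨e, he⟩ u₁ u₂ ⟨f, hf⟩
    have hstar : c₁.uniqueStarL ↔ c₂.uniqueStarL := LPoset.uniqueStarL_congr e he
    refine ⟨{ toEquiv := Equiv.sumCongr
                (e.toEquiv.subtypeEquiv fun x => by
                  rw [show c₂.lab (e.toEquiv x) = c₁.lab x from he x]) f.toEquiv
              map_rel_iff' := ?_ }, ?_⟩
    · rintro (x | x) (y | y)
      · exact e.le_iff_le
      · show (c₂.uniqueStarL ∧ ∃ s, c₂.lab s = none ∧ (e x.val : c₂.carrier) ≤ s) ↔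
             (c₁.uniqueStarL ∧ ∃ s, c₁.lab s = none ∧ x.val ≤ s)
        constructor
        · rintro ⟨hu, s, hs, hxs⟩
          refine ⟨hstar.mpr hu, e.symm s, ?_, ?_⟩
          · have h2 := he (e.symm s)
            rw [OrderIso.apply_symm_apply] at h2
            rw [← h2]; exact hs
          · exact e.le_iff_le.mp (by rw [OrderIso.apply_symm_apply]; exact hxs)
        · rintro ⟨hu, s, hs, hxs⟩
          exact ⟨hstar.mp hu, e s, by rw [he]; exact hs, e.le_iff_le.mpr hxs⟩
      · show (c₂.uniqueStarL ∧ ∃ s, c₂.lab s = none ∧ s ≤ (e y.val : c₂.carrier)) ↔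
             (c₁.uniqueStarL ∧ ∃ s, c₁.lab s = none ∧ s ≤ y.val)
        constructor
        · rintro ⟨hu, s, hs, hsy⟩
          refine ⟨hstar.mpr hu, e.symm s, ?_, ?_⟩
          · have h2 := he (e.symm s)
            rw [OrderIso.apply_symm_apply] at h2
            rw [← h2]; exact hs
          · exact e.le_iff_le.mp (by rw [OrderIso.apply_symm_apply]; exact hsy)
        · rintro ⟨hu, s, hs, hsy⟩
          exact ⟨hstar.mp hu, e s, by rw [he]; exact hs, e.le_iff_le.mpr hsy⟩
      · exact f.le_iff_le
    · rintro (x | x)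
      · exact option_get_eq_get (he x.val) _ _
      · exact hf x)

/-! ### Pomset languages -/

abbrev Lang (A : Type) := Set (Pomset A)

def Lang.seq {A : Type} (L K : Lang A) : Lang A :=
  {W | ∃ U ∈ L, ∃ V ∈ K, W = Pomset.seq U V}

def Lang.par {A : Type} (L K : Lang A) : Lang A :=
  {W | ∃ U ∈ L, ∃ V ∈ K, W = Pomset.par U V}

def Lang.pow {A : Type} (L : Lang A) : ℕ → Lang A
  | 0 => {Pomset.empty A}
  | n + 1 => Lang.seq (Lang.pow L n) L

def Lang.star {A : Type} (L : Lang A) : Lang A := ⋃ n, L.pow n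

/-- Application of a context to a language: `C[L] = {C[U] : U ∈ L}`. -/
def Ctx.img {A : Type} (C : Pomset (Option A)) (L : Lang A) : Lang A :=
  {W | ∃ U ∈ L, W = C.ins U}

/-! ### CKA terms and semantics -/

inductive Term (A : Type) : Type
  | zero : Term A
  | one : Term A
  | var : A → Term A
  | add : Term A → Term A → Term A
  | seq : Term A → Term A → Term A
  | par : Term A → Term A → Term A
  | star : Term A → Term A

/-- Pomset language semantics of CKA terms. -/
def Term.lang {A : Type} : Term A → Lang A
  | .zero => ∅
  | .one => {Pomset.empty A}
  | .var a => {Pomset.single a}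
  | .add e f => e.lang ∪ f.lang
  | .seq e f => Lang.seq e.lang f.lang
  | .par e f => Lang.par e.lang f.lang
  | .star e => Lang.star e.lang

/-- Sets of hypotheses: a hypothesis `e ≤ f` is the pair `(e, f)`. -/
abbrev HypSet (A : Type) := Set (Term A × Term A)

/-- The congruence `≡^H` on CKA terms generated by the CKA axioms and the hypotheses `H`
(the constructor `hyp` encodes `e ≦^H f`, i.e. `e + f ≡^H f`, for `e ≤ f ∈ H`). -/
inductive CongH {A : Type} (H : HypSet A) : Term A → Term A → Prop
  | refl (e) : CongH H e e
  | symm {e f} : CongH H e f → CongH H f e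
  | trans {e f g} : CongH H e f → CongH H f g → CongH H e g
  | addCong {e e' f f'} : CongH H e e' → CongH H f f' → CongH H (.add e f) (.add e' f')
  | seqCong {e e' f f'} : CongH H e e' → CongH H f f' → CongH H (.seq e f) (.seq e' f')
  | parCong {e e' f f'} : CongH H e e' → CongH H f f' → CongH H (.par e f) (.par e' f')
  | starCong {e e'} : CongH H e e' → CongH H (.star e) (.star e')
  | addZero (e) : CongH H (.add e .zero) e
  | addIdem (e) : CongH H (.add e e) e
  | addComm (e f) : CongH H (.add e f) (.add f e)
  | addAssoc (e f g) : CongH H (.add e (.add f g)) (.add (.add e f) g)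
  | seqAssoc (e f g) : CongH H (.seq e (.seq f g)) (.seq (.seq e f) g)
  | seqDistL (e f g) : CongH H (.seq e (.add f g)) (.add (.seq e f) (.seq e g))
  | seqDistR (e f g) : CongH H (.seq (.add e f) g) (.add (.seq e g) (.seq f g))
  | seqOneR (e) : CongH H (.seq e .one) e
  | seqOneL (e) : CongH H (.seq .one e) e
  | seqZeroR (e) : CongH H (.seq e .zero) .zero
  | seqZeroL (e) : CongH H (.seq .zero e) .zero
  | parComm (e f) : CongH H (.par e f) (.par f e)
  | parOne (e) : CongH H (.par e .one) e
  | parZero (e) : CongH H (.par e .zero) .zero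
  | parAssoc (e f g) : CongH H (.par e (.par f g)) (.par (.par e f) g)
  | parDist (e f g) : CongH H (.par e (.add f g)) (.add (.par e f) (.par e g))
  | starUnfoldL (e) : CongH H (.add .one (.seq e (.star e))) (.star e)
  | starUnfoldR (e) : CongH H (.add .one (.seq (.star e) e)) (.star e)
  | lfpL {e f g} : CongH H (.add (.add e (.seq f g)) g) g →
      CongH H (.add (.seq (.star f) e) g) g
  | lfpR {e f g} : CongH H (.add (.add e (.seq f g)) f) f →
      CongH H (.add (.seq e (.star g)) f) f
  | hyp {e f} : (e, f) ∈ H → CongH H (.add e f) f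

/-- `e ≦^H f`, the natural order `e + f ≡^H f`. -/
def LeH {A : Type} (H : HypSet A) (e f : Term A) : Prop := CongH H (.add e f) f

/-- The `H`-closure of a pomset language, as an inductive predicate: the smallest language
containing `L` such that for all `e ≤ f ∈ H` and series-parallel contexts `C`,
if `C[⟦f⟧] ⊆ cl` then `C[⟦e⟧] ⊆ cl`. -/
inductive closure {A : Type} (H : HypSet A) (L : Lang A) : Pomset A → Prop
  | base {U} : U ∈ L → closure H L U
  | step {e f : Term A} (hef : (e, f) ∈ H) {C : Pomset (Option A)} (hC : C.IsSPCtx)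
      (hf : ∀ V ∈ f.lang, closure H L (C.ins V)) {U} (hU : U ∈ e.lang) :
      closure H L (C.ins U)

/-- `cl H L` is the `H`-closure of `L`. -/
def cl {A : Type} (H : HypSet A) (L : Lang A) : Lang A := {U | closure H L U}

/-- The sequential closure: like `cl` but only sequential contexts are used. -/
inductive seqClosure {A : Type} (H : HypSet A) (L : Lang A) : Pomset A → Prop
  | base {U} : U ∈ L → seqClosure H L U
  | step {e f : Term A} (hef : (e, f) ∈ H) {C : Pomset (Option A)} (hC : C.IsSeqCtx)
      (hf : ∀ V ∈ f.lang, seqClosure H L (C.ins V)) {U} (hU : U ∈ e.lang) :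
      seqClosure H L (C.ins U)

def seqCl {A : Type} (H : HypSet A) (L : Lang A) : Lang A := {U | seqClosure H L U}

/-! ### Implication, completeness, reductions -/

/-- `H` implies `H'`: every hypothesis of `H'` is derivable from `H`. -/
def Implies {A : Type} (H H' : HypSet A) : Prop := ∀ p ∈ H', LeH H p.1 p.2

/-- `H` is complete: semantic equivalence implies axiomatic equivalence. -/
def Complete {A : Type} (H : HypSet A) : Prop :=
  ∀ e f : Term A, cl H e.lang = cl H f.lang → CongH H e f

/-- A reduction from `H` to `H'` (presupposing that `H` implies `H'`). -/
structure IsReduction {A : Type} (H H' : HypSet A) (r : Term A → Term A) : Prop where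
  implies : Implies H H'
  equiv : ∀ e, CongH H e (r e)
  reflect : ∀ e f : Term A, cl H e.lang = cl H f.lang → cl H' (r e).lang = cl H' (r f).lang

def Reduces {A : Type} (H H' : HypSet A) : Prop := ∃ r, IsReduction H H' r

/-- A strong reduction from `H` to `H'`. -/
structure IsStrongReduction {A : Type} (H H' : HypSet A) (r : Term A → Term A)
    extends IsReduction H H' r : Prop where
  strong : ∀ e : Term A, cl H e.lang = cl H' (r e).lang

def StronglyReduces {A : Type} (H H' : HypSet A) : Prop := ∃ r, IsStrongReduction H H' r

/-- `H` factorises into `H₀` and `H₁`. -/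
def Factorises {A : Type} (H H₀ H₁ : HypSet A) : Prop :=
  Implies H H₀ ∧ Implies H H₁ ∧ ∀ L : Lang A, L ⊆ SPset A → cl H L = cl H₁ (cl H₀ L)

/-! ### The exchange hypotheses and sp-subsumption -/

/-- The exchange hypotheses `(e∥f)·(g∥h) ≤ (e·g)∥(f·h)`. -/
def exch (A : Type) : HypSet A :=
  {p | ∃ e f g h : Term A,
    p = (Term.seq (.par e f) (.par g h), Term.par (.seq e g) (.seq f h))}

/-- `⊑^sp`: the smallest precongruence on series-parallel pomsets satisfying the
exchange inequality. -/
inductive spSub {A : Type} : Pomset A → Pomset A → Prop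
  | refl {U : Pomset A} : U.IsSP → spSub U U
  | trans {U V W} : spSub U V → spSub V W → spSub U W
  | seqCong {U V U' V'} : spSub U V → spSub U' V' → spSub (Pomset.seq U U') (Pomset.seq V V')
  | parCong {U V U' V'} : spSub U V → spSub U' V' → spSub (Pomset.par U U') (Pomset.par V V')
  | exch {U V W X : Pomset A} : U.IsSP → V.IsSP → W.IsSP → X.IsSP →
      spSub (Pomset.seq (Pomset.par U V) (Pomset.par W X))
            (Pomset.par (Pomset.seq U W) (Pomset.seq V X))

/-! ### KA terms, grounded hypotheses, sequential reductions -/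

/-- A term is a KA term when it contains no `∥`. -/
def Term.noPar {A : Type} : Term A → Prop
  | .zero => True
  | .one => True
  | .var _ => True
  | .add e f => e.noPar ∧ f.noPar
  | .seq e f => e.noPar ∧ f.noPar
  | .par _ _ => False
  | .star e => e.noPar

/-- A non-empty word. -/
def IsNonemptyWord {A : Type} (W : Pomset A) : Prop := W.IsWord ∧ W ≠ Pomset.empty A

/-- A set of hypotheses is grounded when in each hypothesis `e ≤ f`, `e` is a KA term and
`⟦f⟧ = {W}` for a non-empty word `W`. -/
def Grounded {A : Type} (H : HypSet A) : Prop :=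
  ∀ p ∈ H, p.1.noPar ∧ ∃ W : Pomset A, IsNonemptyWord W ∧ p.2.lang = {W}

/-- `≡_KA^H`: the congruence on terms generated by the axioms of `≡` not involving `∥`
together with the hypotheses of `H`. -/
inductive KACong {A : Type} (H : HypSet A) : Term A → Term A → Prop
  | refl (e) : KACong H e e
  | symm {e f} : KACong H e f → KACong H f e
  | trans {e f g} : KACong H e f → KACong H f g → KACong H e g
  | addCong {e e' f f'} : KACong H e e' → KACong H f f' → KACong H (.add e f) (.add e' f')
  | seqCong {e e' f f'} : KACong H e e' → KACong H f f' → KACong H (.seq e f) (.seq e' f')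
  | starCong {e e'} : KACong H e e' → KACong H (.star e) (.star e')
  | addZero (e) : KACong H (.add e .zero) e
  | addIdem (e) : KACong H (.add e e) e
  | addComm (e f) : KACong H (.add e f) (.add f e)
  | addAssoc (e f g) : KACong H (.add e (.add f g)) (.add (.add e f) g)
  | seqAssoc (e f g) : KACong H (.seq e (.seq f g)) (.seq (.seq e f) g)
  | seqDistL (e f g) : KACong H (.seq e (.add f g)) (.add (.seq e f) (.seq e g))
  | seqDistR (e f g) : KACong H (.seq (.add e f) g) (.add (.seq e g) (.seq f g))
  | seqOneR (e) : KACong H (.seq e .one) e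
  | seqOneL (e) : KACong H (.seq .one e) e
  | seqZeroR (e) : KACong H (.seq e .zero) .zero
  | seqZeroL (e) : KACong H (.seq .zero e) .zero
  | starUnfoldL (e) : KACong H (.add .one (.seq e (.star e))) (.star e)
  | starUnfoldR (e) : KACong H (.add .one (.seq (.star e) e)) (.star e)
  | lfpL {e f g} : KACong H (.add (.add e (.seq f g)) g) g →
      KACong H (.add (.seq (.star f) e) g) g
  | lfpR {e f g} : KACong H (.add (.add e (.seq f g)) f) f →
      KACong H (.add (.seq e (.star g)) f) f
  | hyp {e f} : (e, f) ∈ H → KACong H (.add e f) f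

/-- A sequential reduction from `H` to `H'`. -/
structure IsSeqReduction {A : Type} (H H' : HypSet A) (r : Term A → Term A) : Prop where
  implies : Implies H H'
  equiv : ∀ e : Term A, e.noPar → KACong H e (r e)
  closure_eq : ∀ e : Term A, e.noPar → seqCl H e.lang = seqCl H' (r e).lang

/-- Extension of a map on (KA) terms to all CKA terms, homomorphically on `∥`. -/
def parExt {A : Type} (r : Term A → Term A) : Term A → Term A
  | .par e f => .par (parExt r e) (parExt r f)
  | e => r e

/-! ### Inductive characterisation of sp contexts -/

/-- The generators of series-parallel contexts (Lemma: `PC^sp` is the smallest such set). -/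
inductive GenCtx {A : Type} : Pomset (Option A) → Prop
  | star : GenCtx (Pomset.single (none : Option A))
  | seqL {U : Pomset A} {C} : U.IsSP → GenCtx C → GenCtx (Pomset.seq (Pomset.map some U) C)
  | seqR {C} {V : Pomset A} : GenCtx C → V.IsSP → GenCtx (Pomset.seq C (Pomset.map some V))
  | par {U : Pomset A} {C} : U.IsSP → GenCtx C → GenCtx (Pomset.par (Pomset.map some U) C)

/-! ### Reification -/

/-- Homomorphic extension of a letter map to terms. -/
def rTerm {A : Type} (r : A → Term A) : Term A → Term A
  | .zero => .zero
  | .one => .one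
  | .var a => r a
  | .add e f => .add (rTerm r e) (rTerm r f)
  | .seq e f => .seq (rTerm r e) (rTerm r f)
  | .par e f => .par (rTerm r e) (rTerm r f)
  | .star e => .star (rTerm r e)

/-- All letters of a term lie in `Γ`. -/
def TermOver {A : Type} (Γ : Set A) : Term A → Prop
  | .zero => True
  | .one => True
  | .var a => a ∈ Γ
  | .add e f => TermOver Γ e ∧ TermOver Γ f
  | .seq e f => TermOver Γ e ∧ TermOver Γ f
  | .par e f => TermOver Γ e ∧ TermOver Γ f
  | .star e => TermOver Γ e

/-- Extension of a letter map `r` to (series-parallel) pomsets, as a relation: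
`rMap r U V` means `V ∈ r(U)`. -/
inductive rMap {A : Type} (r : A → Term A) : Pomset A → Pomset A → Prop
  | one : rMap r (Pomset.empty A) (Pomset.empty A)
  | var (a : A) {V} : V ∈ (r a).lang → rMap r (Pomset.single a) V
  | seq {U U' V V'} : rMap r U V → rMap r U' V' →
      rMap r (Pomset.seq U U') (Pomset.seq V V')
  | par {U U' V V'} : rMap r U V → rMap r U' V' →
      rMap r (Pomset.par U U') (Pomset.par V V')

/-- Image of a language under (the pomset extension of) `r`. -/
def rImg {A : Type} (r : A → Term A) (L : Lang A) : Lang A := {V | ∃ U ∈ L, rMap r U V}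

/-- Series-parallel pomsets over the subalphabet `Γ`. -/
def SPover {A : Type} (Γ : Set A) : Lang A := {U | U.IsSP ∧ U.Over Γ}

/-- `r : Σ → Term Γ` is a reification from `H` to `H'`. -/
structure IsReification {A : Type} (Γ : Set A) (H H' : HypSet A) (r : A → Term A) : Prop where
  toGamma : ∀ a : A, TermOver Γ (r a)
  equiv : ∀ a : A, CongH H (r a) (.var a)
  expansive : ∀ a ∈ Γ, LeH (∅ : HypSet A) (.var a) (r a)
  preserves : ∀ L : Lang A, L ⊆ SPover Γ → cl H' L ⊆ SPover Γ
  hyps : ∀ p ∈ H, LeH H' (rTerm r p.1) (rTerm r p.2)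

end CKAH

namespace CKAH


/-! ### Helper lemmas -/

theorem mk_eq_of_map {A : Type} (u v : LPoset A) (f : u.carrier → v.carrier)
    (hs : Function.Surjective f) (hle : ∀ a b, f a ≤ f b ↔ a ≤ b)
    (hl : ∀ a, v.lab (f a) = u.lab a) :
    (Quotient.mk (pomSetoid A) u) = Quotient.mk (pomSetoid A) v := by
  apply Quotient.sound
  have hi : Function.Injective f := fun a b h =>
    le_antisymm ((hle a b).1 h.le) ((hle b a).1 h.ge)
  exact ⟨{ toEquiv := Equiv.ofBijective f ⟨hi, hs⟩, map_rel_iff' := fun {a b} => hle a b }, hl⟩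

/-- Pomset of a labelled poset. -/
def pm {A : Type} (u : LPoset A) : Pomset A := Quotient.mk (pomSetoid A) u

theorem pm_eq_of_map {A : Type} (u v : LPoset A) (f : u.carrier → v.carrier)
    (hs : Function.Surjective f) (hle : ∀ a b, f a ≤ f b ↔ a ≤ b)
    (hl : ∀ a, v.lab (f a) = u.lab a) : pm u = pm v := mk_eq_of_map u v f hs hle hl

theorem pm_exact {A : Type} {u v : LPoset A} (h : pm u = pm v) :
    ∃ e : u.carrier ≃o v.carrier, ∀ x, v.lab (e x) = u.lab x := Quotient.exact h

theorem pm_ind {A : Type} {P : Pomset A → Prop} (h : ∀ u, P (pm u)) (U : Pomset A) : P U :=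
  Quotient.inductionOn U h

theorem pm_seq {A : Type} (u v : LPoset A) : Pomset.seq (pm u) (pm v) = pm (u.seqL v) := rfl
theorem pm_par {A : Type} (u v : LPoset A) : Pomset.par (pm u) (pm v) = pm (u.parL v) := rfl
theorem pm_map {A B : Type} (f : A → B) (u : LPoset A) :
    Pomset.map f (pm u) = pm (u.mapL f) := rfl
theorem pm_ins {A : Type} (c : LPoset (Option A)) (u : LPoset A) :
    Pomset.ins (pm c) (pm u) = pm (c.insL u) := rfl

/-- Restriction of a labelled poset to a predicate. -/
noncomputable def restr {A : Type} (u : LPoset A) (p : u.carrier → Prop) : LPoset A where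
  carrier := {x : u.carrier // p x}
  fin := by classical exact inferInstance
  lab := fun x => u.lab x.1

section seqle
variable {A : Type} (u v : LPoset A)
theorem seq_ll (x y : u.carrier) :
    LE.le (α := (u.seqL v).carrier) (toLex (Sum.inl x)) (toLex (Sum.inl y)) ↔ x ≤ y :=
  Sum.Lex.inl_le_inl_iff
theorem seq_rr (x y : v.carrier) :
    LE.le (α := (u.seqL v).carrier) (toLex (Sum.inr x)) (toLex (Sum.inr y)) ↔ x ≤ y :=
  Sum.Lex.inr_le_inr_iff
theorem seq_lr (x : u.carrier) (y : v.carrier) :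
    LE.le (α := (u.seqL v).carrier) (toLex (Sum.inl x)) (toLex (Sum.inr y)) :=
  Sum.Lex.inl_le_inr x y
theorem seq_rl (x : u.carrier) (y : v.carrier) :
    ¬ LE.le (α := (u.seqL v).carrier) (toLex (Sum.inr y)) (toLex (Sum.inl x)) :=
  Sum.Lex.not_inr_le_inl
theorem par_ll (x y : u.carrier) :
    LE.le (α := (u.parL v).carrier) (Sum.inl x) (Sum.inl y) ↔ x ≤ y :=
  Sum.inl_le_inl_iff
theorem par_rr (x y : v.carrier) :
    LE.le (α := (u.parL v).carrier) (Sum.inr x) (Sum.inr y) ↔ x ≤ y :=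
  Sum.inr_le_inr_iff
theorem par_lr (x : u.carrier) (y : v.carrier) :
    ¬ LE.le (α := (u.parL v).carrier) (Sum.inl x) (Sum.inr y) :=
  Sum.not_inl_le_inr
theorem par_rl (x : u.carrier) (y : v.carrier) :
    ¬ LE.le (α := (u.parL v).carrier) (Sum.inr y) (Sum.inl x) :=
  Sum.not_inr_le_inl
end seqle

theorem seq_split {A : Type} (u : LPoset A) (p : u.carrier → Prop)
    (h : ∀ x y, p x → ¬ p y → x ≤ y) :
    pm u = Pomset.seq (pm (restr u p)) (pm (restr u (fun x => ¬ p x))) := by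
  rw [pm_seq]
  symm
  refine pm_eq_of_map _ _ (fun z => Sum.elim (fun x => x.1) (fun x => x.1) (ofLex z)) ?_ ?_ ?_
  · intro x
    by_cases hx : p x
    · exact ⟨toLex (Sum.inl ⟨x, hx⟩), rfl⟩
    · exact ⟨toLex (Sum.inr ⟨x, hx⟩), rfl⟩
  · rintro (x | x) (y | y)
    · exact (seq_ll (restr u p) (restr u (fun x => ¬ p x)) x y).symm
    · exact iff_of_true (h _ _ x.2 y.2) (seq_lr (restr u p) (restr u (fun x => ¬ p x)) x y)
    · refine iff_of_false (fun h' => ?_) (seq_rl (restr u p) (restr u (fun x => ¬ p x)) y x)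
      have := le_antisymm h' (h _ _ y.2 x.2)
      exact x.2 (by rw [show x.1 = y.1 from this]; exact y.2)
    · exact (seq_rr (restr u p) (restr u (fun x => ¬ p x)) x y).symm
  · rintro (x | x) <;> rfl

theorem par_split {A : Type} (u : LPoset A) (p : u.carrier → Prop)
    (h : ∀ x y, p x → ¬ p y → ¬ x ≤ y ∧ ¬ y ≤ x) :
    pm u = Pomset.par (pm (restr u p)) (pm (restr u (fun x => ¬ p x))) := by
  rw [pm_par]
  symm
  refine pm_eq_of_map _ _ (Sum.elim (fun x => x.1) (fun x => x.1)) ?_ ?_ ?_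
  · intro x
    by_cases hx : p x
    · exact ⟨(Sum.inl ⟨x, hx⟩), rfl⟩
    · exact ⟨(Sum.inr ⟨x, hx⟩), rfl⟩
  · rintro (x | x) (y | y)
    · exact (par_ll (restr u p) (restr u (fun x => ¬ p x)) x y).symm
    · exact iff_of_false (h _ _ x.2 y.2).1 (par_lr (restr u p) (restr u (fun x => ¬ p x)) x y)
    · exact iff_of_false (h _ _ y.2 x.2).2 (par_rl (restr u p) (restr u (fun x => ¬ p x)) y x)
    · exact (par_rr (restr u p) (restr u (fun x => ¬ p x)) x y).symm
  · rintro (x | x) <;> rfl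

theorem sp_of_subsingleton {A : Type} (u : LPoset A) (h : Subsingleton u.carrier) :
    (pm u).IsSP := by
  rcases isEmpty_or_nonempty u.carrier with he | ⟨⟨x⟩⟩
  · have : pm u = Pomset.empty A :=
      pm_eq_of_map u (LPoset.emptyL A) (fun x => he.elim x) (fun y => y.elim0)
        (fun a => he.elim a) (fun a => he.elim a)
    rw [this]; exact .empty
  · have : pm u = Pomset.single (u.lab x) :=
      pm_eq_of_map u (LPoset.singleL (u.lab x)) (fun _ => PUnit.unit) (fun y => ⟨x, rfl⟩)
        (fun a b => iff_of_true le_rfl (Subsingleton.elim a b).le)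
        (fun a => by rw [Subsingleton.elim a x]; rfl)
    rw [this]; exact .single _

theorem sp_hered {A B : Type} {V : Pomset B} (hV : V.IsSP) :
    ∀ v, pm v = V → ∀ (u : LPoset A) (e : u.carrier → v.carrier)
      (_ : ∀ a b, e a ≤ e b ↔ a ≤ b), (pm u).IsSP := by
  induction hV with
  | empty =>
    intro v hv u e he
    obtain ⟨f, -⟩ := pm_exact (v := LPoset.emptyL B) hv
    exact sp_of_subsingleton u ⟨fun a _ => (f (e a)).elim0⟩
  | single b =>
    intro v hv u e he
    obtain ⟨f, -⟩ := pm_exact (v := LPoset.singleL b) hv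
    refine sp_of_subsingleton u ⟨fun x y => ?_⟩
    have : e x = e y := f.injective (Subsingleton.elim (α := PUnit) _ _)
    exact le_antisymm ((he _ _).1 this.le) ((he _ _).1 this.ge)
  | @seq U V hU hV ihU ihV =>
    intro v hv u e he
    induction U using pm_ind with | _ u1
    induction V using pm_ind with | _ v1
    rw [pm_seq] at hv
    obtain ⟨f, -⟩ := pm_exact hv
    let g : u.carrier → (u1.seqL v1).carrier := fun x => f (e x)
    have hg : ∀ a b, g a ≤ g b ↔ a ≤ b := fun a b => by
      simp only [g, f.le_iff_le, he]
    let p : u.carrier → Prop := fun x => ∃ y, g x = toLex (Sum.inl y)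
    have hnp : ∀ x, ¬ p x → ∃ y, g x = toLex (Sum.inr y) := by
      intro x hx
      rcases h : g x with y | y
      · exact absurd ⟨y, h⟩ hx
      · exact ⟨y, rfl⟩
    rw [seq_split u p ?_]
    · refine .seq ?_ ?_
      · choose k hk using fun x : {x // p x} => x.2
        refine ihU u1 rfl (restr u p) k (fun a b => ?_)
        have hab := hg a.1 b.1
        rw [hk a, hk b] at hab
        exact (seq_ll u1 v1 _ _).symm.trans hab
      · choose k hk using fun x : {x // ¬ p x} => hnp x.1 x.2
        refine ihV v1 rfl (restr u _) k (fun a b => ?_)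
        have hab := hg a.1 b.1
        rw [hk a, hk b] at hab
        exact (seq_rr u1 v1 _ _).symm.trans hab
    · rintro x y ⟨x', hx⟩ hy
      obtain ⟨y', hy⟩ := hnp y hy
      rw [← hg, hx, hy]; exact seq_lr u1 v1 x' y'
  | @par U V hU hV ihU ihV =>
    intro v hv u e he
    induction U using pm_ind with | _ u1
    induction V using pm_ind with | _ v1
    rw [pm_par] at hv
    obtain ⟨f, -⟩ := pm_exact hv
    let g : u.carrier → (u1.parL v1).carrier := fun x => f (e x)
    have hg : ∀ a b, g a ≤ g b ↔ a ≤ b := fun a b => by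
      simp only [g, f.le_iff_le, he]
    let p : u.carrier → Prop := fun x => ∃ y, g x = Sum.inl y
    have hnp : ∀ x, ¬ p x → ∃ y, g x = Sum.inr y := by
      intro x hx
      rcases h : g x with y | y
      · exact absurd ⟨y, h⟩ hx
      · exact ⟨y, rfl⟩
    rw [par_split u p ?_]
    · refine .par ?_ ?_
      · choose k hk using fun x : {x // p x} => x.2
        refine ihU u1 rfl (restr u p) k (fun a b => ?_)
        have hab := hg a.1 b.1
        rw [hk a, hk b] at hab
        exact (par_ll u1 v1 _ _).symm.trans hab
      · choose k hk using fun x : {x // ¬ p x} => hnp x.1 x.2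
        refine ihV v1 rfl (restr u _) k (fun a b => ?_)
        have hab := hg a.1 b.1
        rw [hk a, hk b] at hab
        exact (par_rr u1 v1 _ _).symm.trans hab
    · rintro x y ⟨x', hx⟩ hy
      obtain ⟨y', hy⟩ := hnp y hy
      rw [← hg, ← hg, hx, hy]
      exact ⟨par_lr u1 v1 x' y', par_rl u1 v1 x' y'⟩

theorem sp_hered' {A B : Type} (v : LPoset B) (hv : (pm v).IsSP) (u : LPoset A)
    (e : u.carrier → v.carrier) (he : ∀ a b, e a ≤ e b ↔ a ≤ b) : (pm u).IsSP :=
  sp_hered hv v rfl u e he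

theorem sp_of_total {A : Type} : ∀ (n : ℕ) (u : LPoset A), Fintype.card u.carrier ≤ n →
    u.isWordL → (pm u).IsSP := by
  intro n
  induction n with
  | zero =>
    intro u hn _
    have : IsEmpty u.carrier := Fintype.card_eq_zero_iff.1 (by omega)
    exact sp_of_subsingleton u inferInstance
  | succ n ih =>
    intro u hn ht
    by_cases hs : Subsingleton u.carrier
    · exact sp_of_subsingleton u hs
    have : ∃ x y : u.carrier, x < y := by
      rw [not_subsingleton_iff_nontrivial] at hs
      obtain ⟨x, y, hxy⟩ := hs.exists_pair_ne
      rcases ht x y with h | h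
      · exact ⟨x, y, lt_of_le_of_ne h hxy⟩
      · exact ⟨y, x, lt_of_le_of_ne h hxy.symm⟩
    obtain ⟨x, y, hxy⟩ := this
    rw [seq_split u (fun z => z ≤ x)
      (fun a b ha hb => ((ht a b).resolve_right (fun h => hb (h.trans ha))))]
    have hc : ∀ (p : u.carrier → Prop) z, ¬ p z → Fintype.card (restr u p).carrier ≤ n := by
      intro p z hz
      have : Fintype.card (restr u p).carrier < Fintype.card u.carrier :=
        Fintype.card_lt_of_injective_of_notMem (fun a : {x // p x} => a.1)
          Subtype.val_injective (b := z) (by rintro ⟨a, rfl⟩; exact hz a.2)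
      omega
    refine .seq (ih _ (hc _ y hxy.not_ge) (fun a b => ht a.1 b.1))
      (ih _ (hc _ x (fun h => h le_rfl)) (fun a b => ht a.1 b.1))

theorem sp_of_word {A : Type} {U : Pomset A} (h : U.IsWord) : U.IsSP := by
  induction U using pm_ind with | _ u
  exact sp_of_total _ u le_rfl h

theorem word_seq {A : Type} {U V : Pomset A} (hU : U.IsWord) (hV : V.IsWord) :
    (Pomset.seq U V).IsWord := by
  induction U using pm_ind with | _ u
  induction V using pm_ind with | _ v
  rintro (x | x) (y | y)
  · exact (hU x y).imp (seq_ll u v x y).2 (seq_ll u v y x).2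
  · exact Or.inl (seq_lr u v x y)
  · exact Or.inr (seq_lr u v y x)
  · exact (hV x y).imp (seq_rr u v x y).2 (seq_rr u v y x).2

theorem word_empty {A : Type} : (Pomset.empty A).IsWord := fun x => x.elim0
theorem word_single {A : Type} (a : A) : (Pomset.single a).IsWord := fun _ _ => Or.inl le_rfl

theorem word_of_noPar {A : Type} (e : Term A) (h : e.noPar) : ∀ U ∈ e.lang, U.IsWord := by
  induction e with
  | zero => intro U hU; exact hU.elim
  | one => intro U hU; rw [show U = _ from hU]; exact word_empty
  | var a => intro U hU; rw [show U = _ from hU]; exact word_single a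
  | add e f ihe ihf =>
    rintro U (hU | hU)
    · exact ihe h.1 U hU
    · exact ihf h.2 U hU
  | seq e f ihe ihf =>
    rintro _ ⟨U, hU, V, hV, rfl⟩
    exact word_seq (ihe h.1 U hU) (ihf h.2 V hV)
  | par e f => exact h.elim
  | star e ih =>
    intro U hU
    obtain ⟨n, hn⟩ := Set.mem_iUnion.1 hU
    induction n generalizing U with
    | zero => rw [show U = _ from hn]; exact word_empty
    | succ n ihn =>
      obtain ⟨V, hV, W, hW, rfl⟩ := hn
      exact word_seq (ihn V (Set.mem_iUnion.2 ⟨n, hV⟩) hV) (ih h W hW)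

/-! ### Insertion order -/
section insle
variable {A : Type} (c : LPoset (Option A)) (u : LPoset A)

theorem ins_ll (x y : {x : c.carrier // c.lab x ≠ none}) :
    LE.le (α := (c.insL u).carrier) (Sum.inl x) (Sum.inl y) ↔ x.1 ≤ y.1 := Iff.rfl
theorem ins_rr (x y : u.carrier) :
    LE.le (α := (c.insL u).carrier) (Sum.inr x) (Sum.inr y) ↔ x ≤ y := Iff.rfl
theorem ins_lr (hc : c.uniqueStarL) {s : c.carrier} (hs : c.lab s = none)
    (x : {x : c.carrier // c.lab x ≠ none}) (y : u.carrier) :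
    LE.le (α := (c.insL u).carrier) (Sum.inl x) (Sum.inr y) ↔ x.1 ≤ s := by
  refine ⟨?_, fun h => ⟨hc, s, hs, h⟩⟩
  rintro ⟨hu, t, ht, h⟩
  rwa [hu.unique hs ht]
theorem ins_rl (hc : c.uniqueStarL) {s : c.carrier} (hs : c.lab s = none)
    (x : {x : c.carrier // c.lab x ≠ none}) (y : u.carrier) :
    LE.le (α := (c.insL u).carrier) (Sum.inr y) (Sum.inl x) ↔ s ≤ x.1 := by
  refine ⟨?_, fun h => ⟨hc, s, hs, h⟩⟩
  rintro ⟨hu, t, ht, h⟩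
  rwa [hu.unique hs ht]
end insle

theorem word_ins {A : Type} {C : Pomset (Option A)} {U : Pomset A} (hC : C.IsSeqCtx)
    (hU : U.IsWord) : (C.ins U).IsWord := by
  induction U using pm_ind with | _ u
  induction C using pm_ind with | _ c
  obtain ⟨hc, ht⟩ := hC
  have hc : c.uniqueStarL := hc
  have ht : c.isWordL := ht
  obtain ⟨s, hs, -⟩ := id hc
  rintro (x | x) (y | y)
  · exact ht x.1 y.1
  · exact (ht x.1 s).imp (ins_lr c u hc hs x y).2 (ins_rl c u hc hs x y).2
  · exact (ht s y.1).imp (ins_rl c u hc hs y x).2 (ins_lr c u hc hs y x).2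
  · exact hU x y

theorem nonempty_of_ne {A : Type} (u : LPoset A) (h : pm u ≠ Pomset.empty A) :
    Nonempty u.carrier := by
  by_contra he
  rw [not_nonempty_iff] at he
  exact h (pm_eq_of_map u (LPoset.emptyL A) (fun x => he.elim x) (fun y => y.elim0)
        (fun a => he.elim a) (fun a => he.elim a))

theorem ctx_word_of_ins {A : Type} {C : Pomset (Option A)} {W : Pomset A} (hC : C.IsCtx)
    (hW : W ≠ Pomset.empty A) (h : (C.ins W).IsWord) : C.IsWord := by
  induction W using pm_ind with | _ w
  induction C using pm_ind with | _ c
  obtain ⟨w0⟩ := nonempty_of_ne w hW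
  have hc : c.uniqueStarL := hC
  have h : (c.insL w).isWordL := h
  obtain ⟨s, hs, -⟩ := id hc
  intro x y
  by_cases hx : c.lab x = none <;> by_cases hy : c.lab y = none
  · exact Or.inl (hc.unique hx hy).le
  · exact (h (Sum.inr w0) (Sum.inl ⟨y, hy⟩)).imp (ins_rl c w hc hx ⟨y, hy⟩ w0).1
      (ins_lr c w hc hx ⟨y, hy⟩ w0).1
  · exact (h (Sum.inl ⟨x, hx⟩) (Sum.inr w0)).imp (ins_lr c w hc hy ⟨x, hx⟩ w0).1
      (ins_rl c w hc hy ⟨x, hx⟩ w0).1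
  · exact h (Sum.inl ⟨x, hx⟩) (Sum.inl ⟨y, hy⟩)

theorem part_one {A : Type} {H : HypSet A} (hH : Grounded H) (L : Lang A)
    (hL : ∀ U ∈ L, U.IsWord) : cl H L = seqCl H L := by
  have hw : ∀ U, seqClosure H L U → U.IsWord := by
    intro U hU
    cases hU with
    | base h => exact hL _ h
    | step hef hC hf hU => exact word_ins hC (word_of_noPar _ (hH _ hef).1 _ hU)
  ext U
  constructor
  · intro hU
    change closure H L U at hU
    change seqClosure H L U
    induction hU with
    | base h => exact .base h
    | @step e f hef C hC hf U hU ih =>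
      refine .step hef ⟨hC.1, ?_⟩ ih hU
      obtain ⟨-, W, ⟨-, hne⟩, hW⟩ := hH _ hef
      exact ctx_word_of_ins hC.1 hne (hw _ (ih W (by rw [hW]; rfl)))
  · intro hU
    change seqClosure H L U at hU
    change closure H L U
    induction hU with
    | base h => exact .base h
    | @step e f hef C hC hf U hU ih => exact .step hef ⟨hC.1, sp_of_word hC.2⟩ ih hU

theorem sp_map {A B : Type} (f : A → B) {u : LPoset A} (h : (pm u).IsSP) :
    (pm (u.mapL f)).IsSP :=
  sp_hered' u h (u.mapL f) (fun x => x) (fun _ _ => Iff.rfl)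

theorem us_inl {A : Type} {c : LPoset (Option A)} (hc : c.uniqueStarL) {s : c.carrier}
    (hs : c.lab s = none) {x : c.carrier} (hx : x ≠ s) : c.lab x ≠ none :=
  fun h => hx (hc.unique h hs)

/-- Embedding for insertion into the left part of a sum. -/
def embL {A : Type} {α β γ : Type} (c1 : α → Option A) (c2 : β → Option A) :
    ({x : α ⊕ β // Sum.elim c1 c2 x ≠ none} ⊕ γ) → ({x : α // c1 x ≠ none} ⊕ γ) ⊕ β
  | Sum.inl ⟨Sum.inl x, h⟩ => Sum.inl (Sum.inl ⟨x, h⟩)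
  | Sum.inl ⟨Sum.inr x, _⟩ => Sum.inr x
  | Sum.inr y => Sum.inl (Sum.inr y)

/-- Embedding for insertion into the right part of a sum. -/
def embR {A : Type} {α β γ : Type} (c1 : α → Option A) (c2 : β → Option A) :
    ({x : α ⊕ β // Sum.elim c1 c2 x ≠ none} ⊕ γ) → α ⊕ ({x : β // c2 x ≠ none} ⊕ γ)
  | Sum.inl ⟨Sum.inl x, _⟩ => Sum.inl x
  | Sum.inl ⟨Sum.inr x, h⟩ => Sum.inr (Sum.inl ⟨x, h⟩)
  | Sum.inr y => Sum.inr (Sum.inr y)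

theorem sp_ins {A : Type} {C : Pomset (Option A)} (hC : C.IsSP) :
    ∀ (u : LPoset A), (pm u).IsSP → C.IsCtx → (C.ins (pm u)).IsSP := by
  induction hC with
  | empty =>
    rintro u hu ⟨x, -⟩
    exact x.elim0
  | single b =>
    rintro u hu ⟨x, hx, -⟩
    have hb : b = none := hx
    refine sp_hered' u hu ((LPoset.singleL b).insL u)
      (Sum.elim (fun x => absurd hb x.2) (fun x => x)) ?_
    rintro (x | x) (y | y)
    · exact absurd hb x.2
    · exact absurd hb x.2
    · exact absurd hb y.2
    · exact Iff.rfl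
  | @seq U V hU hV ihU ihV =>
    intro u hu hc
    induction U using pm_ind with | _ c1
    induction V using pm_ind with | _ c2
    change (c1.seqL c2).uniqueStarL at hc
    change (pm ((c1.seqL c2).insL u)).IsSP
    obtain ⟨s, hs, -⟩ := id hc
    rcases s with s | s
    · have h1 : c1.uniqueStarL := ⟨s, hs, fun y hy =>
        Sum.inl.inj (hc.unique (y₁ := (Sum.inl y : c1.carrier ⊕ c2.carrier)) hy hs)⟩
      have hs1 : c1.lab s = none := hs
      have k1 := sp_map (fun _ => ()) (ihU u hu h1)
      have k2 := sp_map (fun _ => ()) hV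
      refine sp_hered' _ (.seq k1 k2) ((c1.seqL c2).insL u)
        (fun z => toLex (embL c1.lab c2.lab z)) ?_
      rintro (⟨x | x, hx⟩ | x) (⟨y | y, hy⟩ | y)
      · exact (seq_ll ((c1.insL u).mapL (fun _ => ())) (c2.mapL (fun _ => ())) (Sum.inl ⟨x, hx⟩) (Sum.inl ⟨y, hy⟩)).trans
          ((ins_ll (c1.seqL c2) u ⟨toLex (Sum.inl x), hx⟩ ⟨toLex (Sum.inl y), hy⟩).trans (seq_ll c1 c2 x y)).symm
      · exact iff_of_true (seq_lr ((c1.insL u).mapL (fun _ => ())) (c2.mapL (fun _ => ())) (Sum.inl ⟨x, hx⟩) y)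
          ((ins_ll (c1.seqL c2) u ⟨toLex (Sum.inl x), hx⟩ ⟨toLex (Sum.inr y), hy⟩).2 (seq_lr c1 c2 x y))
      · exact ((seq_ll ((c1.insL u).mapL (fun _ => ())) (c2.mapL (fun _ => ())) (Sum.inl ⟨x, hx⟩) (Sum.inr y)).trans (ins_lr c1 u h1 hs1 ⟨x, hx⟩ y)).trans
          ((ins_lr (c1.seqL c2) u hc (s := toLex (Sum.inl s)) hs ⟨toLex (Sum.inl x), hx⟩ y).trans (seq_ll c1 c2 x s)).symm
      · exact iff_of_false (seq_rl ((c1.insL u).mapL (fun _ => ())) (c2.mapL (fun _ => ())) (Sum.inl ⟨y, hy⟩) x)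
          (fun h => (seq_rl c1 c2 y x) ((ins_ll (c1.seqL c2) u ⟨toLex (Sum.inr x), hx⟩ ⟨toLex (Sum.inl y), hy⟩).1 h))
      · exact (seq_rr ((c1.insL u).mapL (fun _ => ())) (c2.mapL (fun _ => ())) x y).trans
          ((ins_ll (c1.seqL c2) u ⟨toLex (Sum.inr x), hx⟩ ⟨toLex (Sum.inr y), hy⟩).trans (seq_rr c1 c2 x y)).symm
      · exact iff_of_false (seq_rl ((c1.insL u).mapL (fun _ => ())) (c2.mapL (fun _ => ())) (Sum.inr y) x)
          (fun h => (seq_rl c1 c2 s x) ((ins_lr (c1.seqL c2) u hc (s := toLex (Sum.inl s)) hs ⟨toLex (Sum.inr x), hx⟩ y).1 h))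
      · exact ((seq_ll ((c1.insL u).mapL (fun _ => ())) (c2.mapL (fun _ => ())) (Sum.inr x) (Sum.inl ⟨y, hy⟩)).trans (ins_rl c1 u h1 hs1 ⟨y, hy⟩ x)).trans
          ((ins_rl (c1.seqL c2) u hc (s := toLex (Sum.inl s)) hs ⟨toLex (Sum.inl y), hy⟩ x).trans (seq_ll c1 c2 s y)).symm
      · exact iff_of_true (seq_lr ((c1.insL u).mapL (fun _ => ())) (c2.mapL (fun _ => ())) (Sum.inr x) y)
          ((ins_rl (c1.seqL c2) u hc (s := toLex (Sum.inl s)) hs ⟨toLex (Sum.inr y), hy⟩ x).2 (seq_lr c1 c2 s y))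
      · exact (seq_ll ((c1.insL u).mapL (fun _ => ())) (c2.mapL (fun _ => ())) (Sum.inr x) (Sum.inr y))
    · have h1 : c2.uniqueStarL := ⟨s, hs, fun y hy =>
        Sum.inr.inj (hc.unique (y₁ := (Sum.inr y : c1.carrier ⊕ c2.carrier)) hy hs)⟩
      have hs1 : c2.lab s = none := hs
      have k1 := sp_map (fun _ => ()) hU
      have k2 := sp_map (fun _ => ()) (ihV u hu h1)
      refine sp_hered' _ (.seq k1 k2) ((c1.seqL c2).insL u)
        (fun z => toLex (embR c1.lab c2.lab z)) ?_
      rintro (⟨x | x, hx⟩ | x) (⟨y | y, hy⟩ | y)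
      · exact (seq_ll (c1.mapL (fun _ => ())) ((c2.insL u).mapL (fun _ => ())) x y).trans
          ((ins_ll (c1.seqL c2) u ⟨toLex (Sum.inl x), hx⟩ ⟨toLex (Sum.inl y), hy⟩).trans (seq_ll c1 c2 x y)).symm
      · exact iff_of_true (seq_lr (c1.mapL (fun _ => ())) ((c2.insL u).mapL (fun _ => ())) x (Sum.inl ⟨y, hy⟩))
          ((ins_ll (c1.seqL c2) u ⟨toLex (Sum.inl x), hx⟩ ⟨toLex (Sum.inr y), hy⟩).2 (seq_lr c1 c2 x y))
      · exact iff_of_true (seq_lr (c1.mapL (fun _ => ())) ((c2.insL u).mapL (fun _ => ())) x (Sum.inr y))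
          ((ins_lr (c1.seqL c2) u hc (s := toLex (Sum.inr s)) hs ⟨toLex (Sum.inl x), hx⟩ y).2 (seq_lr c1 c2 x s))
      · exact iff_of_false (seq_rl (c1.mapL (fun _ => ())) ((c2.insL u).mapL (fun _ => ())) y (Sum.inl ⟨x, hx⟩))
          (fun h => (seq_rl c1 c2 y x) ((ins_ll (c1.seqL c2) u ⟨toLex (Sum.inr x), hx⟩ ⟨toLex (Sum.inl y), hy⟩).1 h))
      · exact (seq_rr (c1.mapL (fun _ => ())) ((c2.insL u).mapL (fun _ => ())) (Sum.inl ⟨x, hx⟩) (Sum.inl ⟨y, hy⟩)).trans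
          ((ins_ll (c1.seqL c2) u ⟨toLex (Sum.inr x), hx⟩ ⟨toLex (Sum.inr y), hy⟩).trans (seq_rr c1 c2 x y)).symm
      · exact ((seq_rr (c1.mapL (fun _ => ())) ((c2.insL u).mapL (fun _ => ())) (Sum.inl ⟨x, hx⟩) (Sum.inr y)).trans (ins_lr c2 u h1 hs1 ⟨x, hx⟩ y)).trans
          ((ins_lr (c1.seqL c2) u hc (s := toLex (Sum.inr s)) hs ⟨toLex (Sum.inr x), hx⟩ y).trans (seq_rr c1 c2 x s)).symm
      · exact iff_of_false (seq_rl (c1.mapL (fun _ => ())) ((c2.insL u).mapL (fun _ => ())) y (Sum.inr x))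
          (fun h => (seq_rl c1 c2 y s) ((ins_rl (c1.seqL c2) u hc (s := toLex (Sum.inr s)) hs ⟨toLex (Sum.inl y), hy⟩ x).1 h))
      · exact ((seq_rr (c1.mapL (fun _ => ())) ((c2.insL u).mapL (fun _ => ())) (Sum.inr x) (Sum.inl ⟨y, hy⟩)).trans (ins_rl c2 u h1 hs1 ⟨y, hy⟩ x)).trans
          ((ins_rl (c1.seqL c2) u hc (s := toLex (Sum.inr s)) hs ⟨toLex (Sum.inr y), hy⟩ x).trans (seq_rr c1 c2 s y)).symm
      · exact (seq_rr (c1.mapL (fun _ => ())) ((c2.insL u).mapL (fun _ => ())) (Sum.inr x) (Sum.inr y))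
  | @par U V hU hV ihU ihV =>
    intro u hu hc
    induction U using pm_ind with | _ c1
    induction V using pm_ind with | _ c2
    change (c1.parL c2).uniqueStarL at hc
    change (pm ((c1.parL c2).insL u)).IsSP
    obtain ⟨s, hs, -⟩ := id hc
    rcases s with s | s
    · have h1 : c1.uniqueStarL := ⟨s, hs, fun y hy =>
        Sum.inl.inj (hc.unique (y₁ := (Sum.inl y : c1.carrier ⊕ c2.carrier)) hy hs)⟩
      have hs1 : c1.lab s = none := hs
      have k1 := sp_map (fun _ => ()) (ihU u hu h1)
      have k2 := sp_map (fun _ => ()) hV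
      refine sp_hered' _ (.par k1 k2) ((c1.parL c2).insL u)
        (fun z => embL c1.lab c2.lab z) ?_
      rintro (⟨x | x, hx⟩ | x) (⟨y | y, hy⟩ | y)
      · exact (par_ll ((c1.insL u).mapL (fun _ => ())) (c2.mapL (fun _ => ())) (Sum.inl ⟨x, hx⟩) (Sum.inl ⟨y, hy⟩)).trans
          ((ins_ll (c1.parL c2) u ⟨Sum.inl x, hx⟩ ⟨Sum.inl y, hy⟩).trans (par_ll c1 c2 x y)).symm
      · exact iff_of_false (par_lr ((c1.insL u).mapL (fun _ => ())) (c2.mapL (fun _ => ())) (Sum.inl ⟨x, hx⟩) y)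
          (fun h => (par_lr c1 c2 x y) ((ins_ll (c1.parL c2) u ⟨Sum.inl x, hx⟩ ⟨Sum.inr y, hy⟩).1 h))
      · exact ((par_ll ((c1.insL u).mapL (fun _ => ())) (c2.mapL (fun _ => ())) (Sum.inl ⟨x, hx⟩) (Sum.inr y)).trans (ins_lr c1 u h1 hs1 ⟨x, hx⟩ y)).trans
          ((ins_lr (c1.parL c2) u hc (s := Sum.inl s) hs ⟨Sum.inl x, hx⟩ y).trans (par_ll c1 c2 x s)).symm
      · exact iff_of_false (par_rl ((c1.insL u).mapL (fun _ => ())) (c2.mapL (fun _ => ())) (Sum.inl ⟨y, hy⟩) x)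
          (fun h => (par_rl c1 c2 y x) ((ins_ll (c1.parL c2) u ⟨Sum.inr x, hx⟩ ⟨Sum.inl y, hy⟩).1 h))
      · exact (par_rr ((c1.insL u).mapL (fun _ => ())) (c2.mapL (fun _ => ())) x y).trans
          ((ins_ll (c1.parL c2) u ⟨Sum.inr x, hx⟩ ⟨Sum.inr y, hy⟩).trans (par_rr c1 c2 x y)).symm
      · exact iff_of_false (par_rl ((c1.insL u).mapL (fun _ => ())) (c2.mapL (fun _ => ())) (Sum.inr y) x)
          (fun h => (par_rl c1 c2 s x) ((ins_lr (c1.parL c2) u hc (s := Sum.inl s) hs ⟨Sum.inr x, hx⟩ y).1 h))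
      · exact ((par_ll ((c1.insL u).mapL (fun _ => ())) (c2.mapL (fun _ => ())) (Sum.inr x) (Sum.inl ⟨y, hy⟩)).trans (ins_rl c1 u h1 hs1 ⟨y, hy⟩ x)).trans
          ((ins_rl (c1.parL c2) u hc (s := Sum.inl s) hs ⟨Sum.inl y, hy⟩ x).trans (par_ll c1 c2 s y)).symm
      · exact iff_of_false (par_lr ((c1.insL u).mapL (fun _ => ())) (c2.mapL (fun _ => ())) (Sum.inr x) y)
          (fun h => (par_lr c1 c2 s y) ((ins_rl (c1.parL c2) u hc (s := Sum.inl s) hs ⟨Sum.inr y, hy⟩ x).1 h))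
      · exact (par_ll ((c1.insL u).mapL (fun _ => ())) (c2.mapL (fun _ => ())) (Sum.inr x) (Sum.inr y))
    · have h1 : c2.uniqueStarL := ⟨s, hs, fun y hy =>
        Sum.inr.inj (hc.unique (y₁ := (Sum.inr y : c1.carrier ⊕ c2.carrier)) hy hs)⟩
      have hs1 : c2.lab s = none := hs
      have k1 := sp_map (fun _ => ()) hU
      have k2 := sp_map (fun _ => ()) (ihV u hu h1)
      refine sp_hered' _ (.par k1 k2) ((c1.parL c2).insL u)
        (fun z => embR c1.lab c2.lab z) ?_
      rintro (⟨x | x, hx⟩ | x) (⟨y | y, hy⟩ | y)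
      · exact (par_ll (c1.mapL (fun _ => ())) ((c2.insL u).mapL (fun _ => ())) x y).trans
          ((ins_ll (c1.parL c2) u ⟨Sum.inl x, hx⟩ ⟨Sum.inl y, hy⟩).trans (par_ll c1 c2 x y)).symm
      · exact iff_of_false (par_lr (c1.mapL (fun _ => ())) ((c2.insL u).mapL (fun _ => ())) x (Sum.inl ⟨y, hy⟩))
          (fun h => (par_lr c1 c2 x y) ((ins_ll (c1.parL c2) u ⟨Sum.inl x, hx⟩ ⟨Sum.inr y, hy⟩).1 h))
      · exact iff_of_false (par_lr (c1.mapL (fun _ => ())) ((c2.insL u).mapL (fun _ => ())) x (Sum.inr y))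
          (fun h => (par_lr c1 c2 x s) ((ins_lr (c1.parL c2) u hc (s := Sum.inr s) hs ⟨Sum.inl x, hx⟩ y).1 h))
      · exact iff_of_false (par_rl (c1.mapL (fun _ => ())) ((c2.insL u).mapL (fun _ => ())) y (Sum.inl ⟨x, hx⟩))
          (fun h => (par_rl c1 c2 y x) ((ins_ll (c1.parL c2) u ⟨Sum.inr x, hx⟩ ⟨Sum.inl y, hy⟩).1 h))
      · exact (par_rr (c1.mapL (fun _ => ())) ((c2.insL u).mapL (fun _ => ())) (Sum.inl ⟨x, hx⟩) (Sum.inl ⟨y, hy⟩)).trans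
          ((ins_ll (c1.parL c2) u ⟨Sum.inr x, hx⟩ ⟨Sum.inr y, hy⟩).trans (par_rr c1 c2 x y)).symm
      · exact ((par_rr (c1.mapL (fun _ => ())) ((c2.insL u).mapL (fun _ => ())) (Sum.inl ⟨x, hx⟩) (Sum.inr y)).trans (ins_lr c2 u h1 hs1 ⟨x, hx⟩ y)).trans
          ((ins_lr (c1.parL c2) u hc (s := Sum.inr s) hs ⟨Sum.inr x, hx⟩ y).trans (par_rr c1 c2 x s)).symm
      · exact iff_of_false (par_rl (c1.mapL (fun _ => ())) ((c2.insL u).mapL (fun _ => ())) y (Sum.inr x))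
          (fun h => (par_rl c1 c2 y s) ((ins_rl (c1.parL c2) u hc (s := Sum.inr s) hs ⟨Sum.inl y, hy⟩ x).1 h))
      · exact ((par_rr (c1.mapL (fun _ => ())) ((c2.insL u).mapL (fun _ => ())) (Sum.inr x) (Sum.inl ⟨y, hy⟩)).trans (ins_rl c2 u h1 hs1 ⟨y, hy⟩ x)).trans
          ((ins_rl (c1.parL c2) u hc (s := Sum.inr s) hs ⟨Sum.inr y, hy⟩ x).trans (par_rr c1 c2 s y)).symm
      · exact (par_rr (c1.mapL (fun _ => ())) ((c2.insL u).mapL (fun _ => ())) (Sum.inr x) (Sum.inr y))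

theorem par_comm {A : Type} (U V : Pomset A) : Pomset.par U V = Pomset.par V U := by
  induction U using pm_ind with | _ u
  induction V using pm_ind with | _ v
  refine pm_eq_of_map (u.parL v) (v.parL u) Sum.swap Sum.swap_rightInverse.surjective ?_ ?_
  · rintro (x | x) (y | y) <;>
      simp only [Sum.swap_inl, Sum.swap_inr, par_ll, par_rr, par_lr, par_rl]
  · rintro (x | x) <;> rfl

theorem ctx_par {A : Type} (c : LPoset (Option A)) (v : LPoset A) (hc : c.uniqueStarL) :
    (c.parL (v.mapL some)).uniqueStarL := by
  obtain ⟨s, hs, hu⟩ := hc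
  refine ⟨Sum.inl s, hs, ?_⟩
  rintro (y | y) hy
  · exact congrArg Sum.inl (hu y hy)
  · exact absurd hy (Option.some_ne_none _)

theorem ins_par {A : Type} (c : LPoset (Option A)) (v t : LPoset A) (hc : c.uniqueStarL) :
    (Pomset.par (pm c) (Pomset.map some (pm v))).ins (pm t)
      = Pomset.par ((pm c).ins (pm t)) (pm v) := by
  have hc' := ctx_par c v hc
  obtain ⟨s, hs, -⟩ := id hc
  have hs' : (c.parL (v.mapL some)).lab (Sum.inl s) = none := hs
  symm
  refine pm_eq_of_map ((c.insL t).parL v) ((c.parL (v.mapL some)).insL t)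
    (fun z => match z with
      | Sum.inl (Sum.inl x) => Sum.inl ⟨Sum.inl x.1, x.2⟩
      | Sum.inl (Sum.inr y) => Sum.inr y
      | Sum.inr x => Sum.inl ⟨Sum.inr x, Option.some_ne_none _⟩) ?_ ?_ ?_
  · rintro (⟨x | x, hx⟩ | x)
    · exact ⟨Sum.inl (Sum.inl ⟨x, hx⟩), rfl⟩
    · exact ⟨Sum.inr x, rfl⟩
    · exact ⟨Sum.inl (Sum.inr x), rfl⟩
  · rintro ((x | x) | x) ((y | y) | y)
    · exact (par_ll c (v.mapL some) _ _).trans (par_ll (c.insL t) v (Sum.inl x) (Sum.inl y)).symm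
    · exact ((ins_lr _ t hc' hs' _ _).trans (par_ll c (v.mapL some) _ _)).trans
        ((par_ll (c.insL t) v _ _).trans (ins_lr c t hc hs _ _)).symm
    · exact iff_of_false (par_lr c (v.mapL some) _ _) (par_lr (c.insL t) v _ _)
    · exact ((ins_rl _ t hc' hs' _ _).trans (par_ll c (v.mapL some) _ _)).trans
        ((par_ll (c.insL t) v _ _).trans (ins_rl c t hc hs _ _)).symm
    · exact (par_ll (c.insL t) v (Sum.inr x) (Sum.inr y)).symm
    · exact iff_of_false (fun h => par_lr c (v.mapL some) _ _ ((ins_rl _ t hc' hs' _ _).1 h))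
        (par_lr (c.insL t) v _ _)
    · exact iff_of_false (par_rl c (v.mapL some) _ _) (par_rl (c.insL t) v _ _)
    · exact iff_of_false (fun h => par_rl c (v.mapL some) _ _ ((ins_lr _ t hc' hs' _ _).1 h))
        (par_rl (c.insL t) v _ _)
    · exact (par_rr c (v.mapL some) _ _).trans (par_rr (c.insL t) v _ _).symm
  · rintro ((x | x) | x) <;> rfl

/-- If `C[W] = U ∥ V` with `W` a non-empty word (part of) lying in `U`, the context splits. -/
theorem split_aux {A : Type} (c : LPoset (Option A)) (w u v : LPoset A) (hc : c.uniqueStarL)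
    (hw : w.isWordL) (w0 : w.carrier) (φ : (c.insL w).carrier ≃o (u.parL v).carrier)
    (hφ : ∀ x, (u.parL v).lab (φ x) = (c.insL w).lab x) (u0 : u.carrier)
    (h0 : φ (Sum.inr w0) = Sum.inl u0) :
    ∃ c' : LPoset (Option A), c'.uniqueStarL ∧ ((pm c).IsSP → (pm c').IsSP) ∧
      (pm c').ins (pm w) = pm u ∧ ∀ T, (pm c).ins T = Pomset.par ((pm c').ins T) (pm v) := by
  obtain ⟨s, hs, -⟩ := id hc
  have hall : ∀ y : w.carrier, ∃ z, φ (Sum.inr y) = Sum.inl z := by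
    intro y
    rcases h : φ (Sum.inr y) with z | z
    · exact ⟨z, rfl⟩
    · exfalso
      rcases hw w0 y with hle | hle
      · have := (φ.le_iff_le (x := Sum.inr w0) (y := Sum.inr y)).2 hle
        rw [h0, h] at this
        exact par_lr u v _ _ this
      · have := (φ.le_iff_le (x := Sum.inr y) (y := Sum.inr w0)).2 hle
        rw [h0, h] at this
        exact par_rl u v _ _ this
  let p : c.carrier → Prop := fun x => ∀ h : c.lab x ≠ none, ∃ z, φ (Sum.inl ⟨x, h⟩) = Sum.inl z
  have hps : p s := fun h => absurd hs h
  have hnp : ∀ x, ¬ p x → ∃ h : c.lab x ≠ none, ∃ z, φ (Sum.inl ⟨x, h⟩) = Sum.inr z := by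
    intro x hx
    simp only [p, not_forall] at hx
    obtain ⟨h, hx⟩ := hx
    refine ⟨h, ?_⟩
    rcases h' : φ (Sum.inl ⟨x, h⟩) with z | z
    · exact absurd ⟨z, h'⟩ hx
    · exact ⟨z, rfl⟩
  have hinc : ∀ x y, p x → ¬ p y → ¬ x ≤ y ∧ ¬ y ≤ x := by
    intro x y hx hy
    obtain ⟨hy', z, hz⟩ := hnp y hy
    by_cases hxs : c.lab x = none
    · constructor
      · intro hle
        have := (φ.le_iff_le).2 ((ins_rl c w hc hxs ⟨y, hy'⟩ w0).2 hle)
        rw [h0, hz] at this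
        exact par_lr u v _ _ this
      · intro hle
        have := (φ.le_iff_le).2 ((ins_lr c w hc hxs ⟨y, hy'⟩ w0).2 hle)
        rw [h0, hz] at this
        exact par_rl u v _ _ this
    · obtain ⟨z', hz'⟩ := hx hxs
      constructor
      · intro hle
        have := (φ.le_iff_le).2 ((ins_ll c w ⟨x, hxs⟩ ⟨y, hy'⟩).2 hle)
        rw [hz', hz] at this
        exact par_lr u v _ _ this
      · intro hle
        have := (φ.le_iff_le).2 ((ins_ll c w ⟨y, hy'⟩ ⟨x, hxs⟩).2 hle)
        rw [hz', hz] at this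
        exact par_rl u v _ _ this
  have hc' : (restr c p).uniqueStarL :=
    ⟨⟨s, hps⟩, hs, fun y hy => Subtype.ext (hc.unique hy hs)⟩
  have hs' : (restr c p).lab ⟨s, hps⟩ = none := hs
  refine ⟨restr c p, hc', fun h => sp_hered' c h _ (fun x => x.1) (fun _ _ => Iff.rfl), ?_, ?_⟩
  · let ι : ((restr c p).insL w).carrier → (c.insL w).carrier := fun z => match z with
      | Sum.inl x => Sum.inl ⟨x.1.1, x.2⟩
      | Sum.inr y => Sum.inr y
    have hι : ∀ a b, ι a ≤ ι b ↔ a ≤ b := by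
      rintro (x | x) (y | y)
      · exact Iff.rfl
      · exact (ins_lr c w hc hs _ _).trans (ins_lr (restr c p) w hc' hs' _ _).symm
      · exact (ins_rl c w hc hs _ _).trans (ins_rl (restr c p) w hc' hs' _ _).symm
      · exact Iff.rfl
    have hex : ∀ z, ∃ y, φ (ι z) = Sum.inl y := by
      rintro (x | x)
      · exact x.1.2 x.2
      · exact hall x
    choose k hk using hex
    refine pm_eq_of_map ((restr c p).insL w) u k ?_ ?_ ?_
    · intro y
      rcases h : φ.symm (Sum.inl y) with ⟨x, hx⟩ | x
      · have h2 : φ (Sum.inl ⟨x, hx⟩) = Sum.inl y := by rw [← h]; exact φ.apply_symm_apply _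
        refine ⟨Sum.inl ⟨⟨x, fun _ => ⟨y, h2⟩⟩, hx⟩, ?_⟩
        exact Sum.inl.inj ((hk _).symm.trans h2)
      · have h2 : φ (Sum.inr x) = Sum.inl y := by rw [← h]; exact φ.apply_symm_apply _
        exact ⟨Sum.inr x, Sum.inl.inj ((hk _).symm.trans h2)⟩
    · intro a b
      rw [← hι, ← φ.le_iff_le, hk, hk]
      exact (par_ll u v _ _).symm
    · intro a
      have h1 := hφ (ι a)
      rw [hk] at h1
      refine (show u.lab (k a) = _ from h1).trans ?_
      rcases a with a | a <;> rfl
  · have hv : pm (restr c (fun x => ¬ p x)) = Pomset.map some (pm v) := by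
      choose hk1 k hk using hnp
      refine pm_eq_of_map (restr c (fun x => ¬ p x)) (v.mapL some) (fun x => k x.1 x.2) ?_ ?_ ?_
      · intro y
        rcases h : φ.symm (Sum.inr y) with ⟨x, hx⟩ | x
        · have h2 : φ (Sum.inl ⟨x, hx⟩) = Sum.inr y := by rw [← h]; exact φ.apply_symm_apply _
          have hpx : ¬ p x := by
            intro hp
            obtain ⟨z, hz⟩ := hp hx
            rw [h2] at hz
            exact absurd hz Sum.inr_ne_inl
          refine ⟨⟨x, hpx⟩, ?_⟩
          exact Sum.inr.inj ((hk x hpx).symm.trans h2)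
        · have h2 : φ (Sum.inr x) = Sum.inr y := by rw [← h]; exact φ.apply_symm_apply _
          obtain ⟨z, hz⟩ := hall x
          rw [h2] at hz
          exact absurd hz Sum.inr_ne_inl
      · intro a b
        have h1 := φ.le_iff_le (x := Sum.inl ⟨a.1, hk1 a.1 a.2⟩) (y := Sum.inl ⟨b.1, hk1 b.1 b.2⟩)
        rw [hk a.1 a.2, hk b.1 b.2] at h1
        exact (par_rr u v _ _).symm.trans h1
      · intro a
        have h1 := hφ (Sum.inl ⟨a.1, hk1 a.1 a.2⟩)
        rw [hk a.1 a.2] at h1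
        have h2 : v.lab (k a.1 a.2) = (c.lab a.1).get _ := h1
        change some (v.lab (k a.1 a.2)) = c.lab a.1
        rw [h2, Option.some_get]
    intro T
    induction T using pm_ind with | _ t
    rw [← ins_par _ _ _ hc', ← hv, ← par_split c p hinc]

theorem split_ctx {A : Type} {C : Pomset (Option A)} (hC : C.IsSPCtx) {W U V : Pomset A}
    (hW : IsNonemptyWord W) (h : C.ins W = Pomset.par U V) :
    (∃ C' : Pomset (Option A), C'.IsSPCtx ∧ C'.ins W = U ∧
      ∀ T, C.ins T = Pomset.par (C'.ins T) V) ∨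
    (∃ C' : Pomset (Option A), C'.IsSPCtx ∧ C'.ins W = V ∧
      ∀ T, C.ins T = Pomset.par U (C'.ins T)) := by
  induction C using pm_ind with | _ c
  induction W using pm_ind with | _ w
  induction U using pm_ind with | _ u
  induction V using pm_ind with | _ v
  obtain ⟨w0⟩ := nonempty_of_ne w hW.2
  obtain ⟨φ, hφ⟩ := pm_exact (u := c.insL w) (v := u.parL v) h
  rcases h0 : φ (Sum.inr w0) with u0 | v0
  · obtain ⟨c', h1, h2, h3, h4⟩ := split_aux c w u v hC.1 hW.1 w0 φ hφ u0 h0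
    exact Or.inl ⟨pm c', ⟨h1, h2 hC.2⟩, h3, h4⟩
  · right
    let ψ : (c.insL w).carrier ≃o (v.parL u).carrier :=
      φ.trans (OrderIso.sumComm u.carrier v.carrier)
    obtain ⟨c', h1, h2, h3, h4⟩ := split_aux c w v u hC.1 hW.1 w0 ψ (by
      intro x
      rw [← hφ x]
      change (v.parL u).lab (Sum.swap (φ x)) = _
      rcases φ x with y | y <;> rfl) v0 (by
      change Sum.swap (φ (Sum.inr w0)) = _
      rw [h0]; rfl)
    exact ⟨pm c', ⟨h1, h2 hC.2⟩, h3, fun T => by rw [h4, par_comm]⟩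

theorem cl_sp {A : Type} {H : HypSet A} (hH : Grounded H) {L : Lang A} (hL : L ⊆ SPset A)
    {U : Pomset A} (hU : closure H L U) : U.IsSP := by
  cases hU with
  | base h => exact hL h
  | @step e f hef C hC hf U hU =>
    induction U using pm_ind with | _ u
    exact sp_ins hC.2 u (sp_of_word (word_of_noPar _ (hH _ hef).1 _ hU)) hC.1

theorem cl_par_left {A : Type} {H : HypSet A} (L K : Lang A) {V : Pomset A} (hV : V.IsSP)
    (hb : ∀ U ∈ L, closure H K (Pomset.par U V)) {U : Pomset A} (hU : closure H L U) :
    closure H K (Pomset.par U V) := by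
  induction V using pm_ind with | _ v
  induction hU with
  | base h => exact hb _ h
  | @step e f hef C hC hf U hU ih =>
    induction C using pm_ind with | _ c
    have key : ∀ T, (Pomset.par (pm c) (Pomset.map some (pm v))).ins T
        = Pomset.par ((pm c).ins T) (pm v) := by
      intro T
      induction T using pm_ind with | _ t
      exact ins_par c v t hC.1
    rw [← key]
    refine closure.step (C := Pomset.par (pm c) (Pomset.map some (pm v))) hef
      ⟨ctx_par c v hC.1, .par hC.2 (sp_map some hV)⟩ ?_ hU
    intro T hT
    rw [key]
    exact ih T hT

theorem part_two {A : Type} {H : HypSet A} (hH : Grounded H) (L L' : Lang A)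
    (hL : L ⊆ SPset A) (hL' : L' ⊆ SPset A) :
    cl H (Lang.par L L') = Lang.par (cl H L) (cl H L') := by
  ext X
  constructor
  · intro hX
    change closure H _ X at hX
    induction hX with
    | base h =>
      obtain ⟨U, hU, V, hV, rfl⟩ := h
      exact ⟨U, .base hU, V, .base hV, rfl⟩
    | @step e f hef C hC hf T hT ih =>
      obtain ⟨-, W, hne, hW⟩ := hH _ hef
      have hW : f.lang = {W} := hW
      obtain ⟨U, hU, V, hV, hUV⟩ := ih W (by rw [hW]; rfl)
      rcases split_ctx hC hne hUV with ⟨C', h1, h2, h3⟩ | ⟨C', h1, h2, h3⟩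
      · refine ⟨C'.ins T, closure.step hef h1 ?_ hT, V, hV, h3 T⟩
        intro T' hT'
        rw [hW] at hT'
        rw [show T' = W from hT', h2]; exact hU
      · refine ⟨U, hU, C'.ins T, closure.step hef h1 ?_ hT, h3 T⟩
        intro T' hT'
        rw [hW] at hT'
        rw [show T' = W from hT', h2]; exact hV
  · rintro ⟨U, hU, V, hV, rfl⟩
    change closure H _ _
    rw [par_comm]
    refine cl_par_left L' _ (cl_sp hH hL hU) ?_ hV
    intro V hV
    rw [par_comm]
    refine cl_par_left L _ (hL' hV) ?_ hU
    intro U hU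
    exact .base ⟨U, hU, V, hV, rfl⟩

/-- **Closure of word languages under grounded hypotheses**: (i) on word languages,
closure and sequential closure agree; (ii) closure commutes with `∥` on SP languages. -/
theorem grounded_closure (A : Type) (H : HypSet A) (hH : Grounded H) :
    (∀ L : Lang A, (∀ U ∈ L, U.IsWord) → cl H L = seqCl H L) ∧
    (∀ L L' : Lang A, L ⊆ SPset A → L' ⊆ SPset A →
      cl H (Lang.par L L') = Lang.par (cl H L) (cl H L')) := by
  exact ⟨fun L hL => part_one hH L hL, fun L L' hL hL' => part_two hH L L' hL hL'⟩

end CKAH
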